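/- The character of the representation π_{(ξ,η,λ)} with |λ|_p = p^n > 1 is χ(x,y,z) = p^{nd} e^{2πi{ξ·x + η·y + λz}_p} 1_{p^n Z_p^d}(x) 1_{p^n Z_p^d}(y) up to the stated normalization, and its L² norm over H_d equals 1; consequently π_{(ξ,η,λ)} is irreducible. -/

import Mathlib

noncomputable section

variable (p : ℕ) [Fact p.Prime] (d : ℕ)

def dotZ (x y : Fin d → ℤ_[p]) : ℤ_[p] := ∑ i, x i * y i

/-- The Heisenberg group `H_d(ℤ_p)`: the set `ℤ_p^{2d+1}` written as triples `(x, y, z)`. -/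
@[ext] structure Heis where
  x : Fin d → ℤ_[p]
  y : Fin d → ℤ_[p]
  z : ℤ_[p]

variable {p d}

instance : Mul (Heis p d) :=
  ⟨fun g g' => ⟨g.x + g'.x, g.y + g'.y, g.z + g'.z + dotZ p d g.x g'.y⟩⟩
instance : One (Heis p d) := ⟨⟨0, 0, 0⟩⟩
instance : Inv (Heis p d) :=
  ⟨fun g => ⟨-g.x, -g.y, -g.z + dotZ p d g.x g.y⟩⟩

lemma heis_mul_def (g g' : Heis p d) :
    g * g' = ⟨g.x + g'.x, g.y + g'.y, g.z + g'.z + dotZ p d g.x g'.y⟩ := rfl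
lemma heis_one_def : (1 : Heis p d) = ⟨0, 0, 0⟩ := rfl
lemma heis_inv_def (g : Heis p d) :
    g⁻¹ = ⟨-g.x, -g.y, -g.z + dotZ p d g.x g.y⟩ := rfl

instance heisGroup : Group (Heis p d) :=
  Group.ofLeftAxioms
    (by
      rintro ⟨a1, a2, a3⟩ ⟨b1, b2, b3⟩ ⟨c1, c2, c3⟩
      simp only [heis_mul_def, dotZ, Pi.add_apply, add_mul, mul_add,
        Finset.sum_add_distrib, Heis.mk.injEq]
      refine ⟨add_assoc _ _ _, add_assoc _ _ _, by ring⟩)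
    (by
      rintro ⟨a1, a2, a3⟩
      simp [heis_mul_def, heis_one_def, dotZ])
    (by
      rintro ⟨a1, a2, a3⟩
      simp only [heis_mul_def, heis_inv_def, heis_one_def, dotZ,
        Pi.neg_apply, Heis.mk.injEq, neg_add_cancel]
      refine ⟨trivial, trivial, by ring_nf; simp⟩)

open MeasureTheory

variable (p d)

/-- Truncation of a `p`-adic number to a `p`-adic integer (`0` if it is not an integer). -/
def padicToInt (x : ℚ_[p]) : ℤ_[p] := if h : ‖x‖ ≤ 1 then ⟨x, h⟩ else 0

/-- The `p`-adic fractional part `{x}_p`, as a rational number. -/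
def padicFract (x : ℚ_[p]) : ℚ :=
  ((padicToInt p (x * (p : ℚ_[p]) ^ (-x.valuation).toNat)).appr (-x.valuation).toNat : ℚ) /
    (p : ℚ) ^ (-x.valuation).toNat

/-- The additive character `x ↦ e^{2πi {x}_p}` of `ℚ_p`. -/
def eChar (x : ℚ_[p]) : ℂ := Complex.exp (2 * Real.pi * Complex.I * (padicFract p x : ℂ))

instance : MeasurableSpace ℤ_[p] := borel _
instance : BorelSpace ℤ_[p] := ⟨rfl⟩
instance : TopologicalSpace (Heis p d) :=
  TopologicalSpace.induced (fun g => (g.x, g.y, g.z)) inferInstance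
instance : MeasurableSpace (Heis p d) := borel _
instance : BorelSpace (Heis p d) := ⟨rfl⟩

/-- Pairing of a `ℚ_p`-covector with a `ℤ_p`-vector. -/
def dotQZ (ξ : Fin d → ℚ_[p]) (x : Fin d → ℤ_[p]) : ℚ_[p] := ∑ i, ξ i * (x i : ℚ_[p])

/-- The Schrödinger-type realization
`π_{(ξ,η,λ)}(x,y,z)φ(u) = e^{2πi{ξ·x + η·y + λ(z + u·y)}_p} φ(u + x)`. -/
def piAct (ξ η : Fin d → ℚ_[p]) (lam : ℚ_[p]) (g : Heis p d)
    (φ : (Fin d → ℤ_[p]) → ℂ) : (Fin d → ℤ_[p]) → ℂ := fun u =>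
  eChar p (dotQZ p d ξ g.x + dotQZ p d η g.y +
      lam * ((g.z : ℚ_[p]) + (dotZ p d u g.y : ℚ_[p]))) * φ (u + g.x)

/-- `φ` is invariant under translations by `p^n ℤ_p^d`. -/
def InvariantUnder (n : ℕ) (φ : (Fin d → ℤ_[p]) → ℂ) : Prop :=
  ∀ u v : Fin d → ℤ_[p], (∀ i, ‖v i‖ ≤ (p : ℝ) ^ (-(n : ℤ))) → φ (u + v) = φ u

/-- The indicator function of the coset `h + p^n ℤ_p^d`. -/
def indC (n : ℕ) (h : Fin d → ℤ_[p]) : (Fin d → ℤ_[p]) → ℂ :=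
  Set.indicator {u | ∀ i, ‖u i - h i‖ ≤ (p : ℝ) ^ (-(n : ℤ))} fun _ => (1 : ℂ)

/-- The representation space `H_λ` (span of coset indicators), `|λ|_p = p^n`. -/
def Hlam (n : ℕ) : Submodule ℂ ((Fin d → ℤ_[p]) → ℂ) :=
  Submodule.span ℂ {f | ∃ h : Fin d → ℤ_[p], f = indC p d n h}

/-- The basis vector `φ_h = |λ|_p^{d/2} 1_{h + p^n ℤ_p^d}` of `H_λ`. -/
def phiB (n : ℕ) (h : Fin d → ℤ_[p]) : (Fin d → ℤ_[p]) → ℂ := fun u =>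
  (Real.sqrt ((p : ℝ) ^ (n * d)) : ℂ) * indC p d n h u

/-- The character (trace) of `π_{(ξ,η,λ)}`, computed with respect to the orthonormal basis
`φ_h`, `h` running over representatives of `ℤ_p^d / p^n ℤ_p^d`. -/
def chiRep (ξ η : Fin d → ℚ_[p]) (lam : ℚ_[p]) (n : ℕ)
    (μ : MeasureTheory.Measure (Fin d → ℤ_[p])) (g : Heis p d) : ℂ :=
  ∑ h : Fin d → Fin (p ^ n),
    ∫ u, piAct p d ξ η lam g (phiB p d n fun i => ((h i : ℕ) : ℤ_[p])) u *
      (starRingEnd ℂ) (phiB p d n (fun i => ((h i : ℕ) : ℤ_[p])) u) ∂μ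

/-! ### The additive character -/

lemma aux_int_of_norm_le {b : ℤ} {M : ℕ}
    (h : ‖(((b : ℚ) / (p : ℚ) ^ M : ℚ) : ℚ_[p])‖ ≤ 1) : ∃ c : ℤ, (b : ℚ) / (p : ℚ) ^ M = c := by
  have hp : (0 : ℝ) < p := by exact_mod_cast (Fact.out : p.Prime).pos
  have hpq : (p : ℚ) ≠ 0 := by exact_mod_cast (Fact.out : p.Prime).ne_zero
  have h2 : ‖(b : ℚ_[p])‖ ≤ (p : ℝ) ^ (-M : ℤ) := by
    push_cast at h
    rw [norm_div, norm_pow, Padic.norm_p, inv_pow, div_inv_eq_mul] at h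
    rw [zpow_neg, zpow_natCast]
    rw [← one_div, le_div_iff₀ (by positivity)]
    exact h
  rw [Padic.norm_int_le_pow_iff_dvd] at h2
  obtain ⟨c, rfl⟩ := h2
  refine ⟨c, ?_⟩
  push_cast
  field_simp

lemma aux_fract_form (x : ℚ_[p]) : ∃ (b : ℤ) (M : ℕ), padicFract p x = (b : ℚ) / (p : ℚ) ^ M :=
  ⟨((padicToInt p (x * (p : ℚ_[p]) ^ (-x.valuation).toNat)).appr (-x.valuation).toNat : ℕ),
    (-x.valuation).toNat, by rw [padicFract, Int.cast_natCast]⟩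

lemma aux_fract_spec (x : ℚ_[p]) : ‖x - (padicFract p x : ℚ_[p])‖ ≤ 1 := by
  have hp : (0 : ℝ) < p := by exact_mod_cast (Fact.out : p.Prime).pos
  have hp1 : (1 : ℝ) ≤ p := by exact_mod_cast (Fact.out : p.Prime).one_le
  have hpq : (p : ℚ_[p]) ≠ 0 := by exact_mod_cast (Fact.out : p.Prime).ne_zero
  rw [padicFract]
  generalize hk : (-x.valuation).toNat = k
  have hle : ‖x * (p : ℚ_[p]) ^ k‖ ≤ 1 := by
    by_cases hx : x = 0
    · simp [hx]
    rw [norm_mul, Padic.norm_eq_zpow_neg_valuation hx, norm_pow, Padic.norm_p, inv_pow,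
      ← div_eq_mul_inv, div_le_one (by positivity), ← zpow_natCast]
    apply zpow_le_zpow_right₀ hp1
    omega
  have hti : padicToInt p (x * (p : ℚ_[p]) ^ k) = ⟨_, hle⟩ :=
    dif_pos hle
  have hs := PadicInt.appr_spec k (padicToInt p (x * (p : ℚ_[p]) ^ k))
  rw [← PadicInt.norm_le_pow_iff_mem_span_pow, PadicInt.norm_def] at hs
  generalize (padicToInt p (x * (p : ℚ_[p]) ^ k)).appr k = a at hs
  rw [hti] at hs
  push_cast at hs ⊢
  have e : x - (a : ℚ_[p]) / (p : ℚ_[p]) ^ k = (x * (p : ℚ_[p]) ^ k - a) / (p : ℚ_[p]) ^ k := by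
    field_simp
  rw [e, norm_div, norm_pow, Padic.norm_p, inv_pow, div_inv_eq_mul, ← le_div_iff₀ (by positivity),
    one_div]
  rwa [zpow_neg, zpow_natCast] at hs

lemma aux_norm_sub_le (x y : ℚ_[p]) : ‖x - y‖ ≤ max ‖x‖ ‖y‖ := by
  have := IsUltrametricDist.norm_add_le_max x (-y)
  rwa [norm_neg, ← sub_eq_add_neg] at this

lemma aux_eChar_add (x y : ℚ_[p]) : eChar p (x + y) = eChar p x * eChar p y := by
  obtain ⟨b, M, hb⟩ := aux_fract_form p x
  obtain ⟨c, N, hc⟩ := aux_fract_form p y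
  obtain ⟨e, K, he⟩ := aux_fract_form p (x + y)
  have hpq : (p : ℚ) ≠ 0 := by exact_mod_cast (Fact.out : p.Prime).ne_zero
  have key : ∃ m : ℤ, padicFract p (x + y) - (padicFract p x + padicFract p y) = m := by
    have hf : padicFract p (x + y) - (padicFract p x + padicFract p y) =
        ((e * p ^ M * p ^ N - b * p ^ K * p ^ N - c * p ^ K * p ^ M : ℤ) : ℚ) /
          (p : ℚ) ^ (K + M + N) := by
      rw [hb, hc, he]
      push_cast
      field_simp
      ring
    have hn : ‖((padicFract p (x + y) - (padicFract p x + padicFract p y) : ℚ) : ℚ_[p])‖ ≤ 1 := by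
      have h1 := aux_fract_spec p x
      have h2 := aux_fract_spec p y
      have h3 := aux_fract_spec p (x + y)
      have e1 : ((padicFract p (x + y) - (padicFract p x + padicFract p y) : ℚ) : ℚ_[p]) =
        ((x - padicFract p x) + (y - padicFract p y)) - (x + y - padicFract p (x + y)) := by
        push_cast; ring
      rw [e1]
      refine (aux_norm_sub_le p _ _).trans (max_le ?_ h3)
      exact (IsUltrametricDist.norm_add_le_max _ _).trans (max_le h1 h2)
    rw [hf] at hn ⊢
    exact aux_int_of_norm_le p hn
  obtain ⟨m, hm⟩ := key
  rw [eChar, eChar, eChar, ← Complex.exp_add, Complex.exp_eq_exp_iff_exists_int]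
  refine ⟨m, ?_⟩
  have : (padicFract p (x + y) : ℂ) = padicFract p x + padicFract p y + m := by
    have : padicFract p (x + y) = padicFract p x + padicFract p y + m := by linarith
    rw [this]; push_cast; ring
  rw [this]; ring

lemma aux_eChar_eq_one (x : ℚ_[p]) : eChar p x = 1 ↔ ‖x‖ ≤ 1 := by
  have hs := aux_fract_spec p x
  rw [eChar, Complex.exp_eq_one_iff]
  have hI : (2 * Real.pi * Complex.I : ℂ) ≠ 0 := Complex.two_pi_I_ne_zero
  constructor
  · rintro ⟨m, hm⟩
    have h1 : (padicFract p x : ℂ) = m := by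
      apply mul_left_cancel₀ hI
      rw [hm]; ring
    have h2 : padicFract p x = m := by exact_mod_cast h1
    rw [h2] at hs
    have e : x = (x - ((m : ℚ) : ℚ_[p])) + (m : ℚ_[p]) := by push_cast; ring
    rw [e]
    exact (IsUltrametricDist.norm_add_le_max _ _).trans (max_le hs (Padic.norm_int_le_one m))
  · intro hx
    obtain ⟨b, M, hb⟩ := aux_fract_form p x
    have hn : ‖(padicFract p x : ℚ_[p])‖ ≤ 1 := by
      have e : (padicFract p x : ℚ_[p]) = x - (x - padicFract p x) := by ring
      rw [e]
      exact (aux_norm_sub_le p _ _).trans (max_le hx hs)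
    rw [hb] at hn
    obtain ⟨c, hc⟩ := aux_int_of_norm_le p hn
    refine ⟨c, ?_⟩
    rw [hb, hc]; push_cast; ring

lemma aux_eChar_norm (x : ℚ_[p]) : ‖eChar p x‖ = 1 := by
  rw [eChar]
  have : (2 * Real.pi * Complex.I * (padicFract p x : ℂ)) =
      ((2 * Real.pi * (padicFract p x : ℝ) : ℝ) : ℂ) * Complex.I := by
    push_cast; ring
  rw [this, Complex.norm_exp_ofReal_mul_I]

lemma aux_eChar_zero : eChar p 0 = 1 := (aux_eChar_eq_one p 0).2 (by simp)

lemma aux_eChar_nsmul (k : ℕ) (x : ℚ_[p]) : eChar p (k * x) = eChar p x ^ k := by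
  induction k with
  | zero => simp [aux_eChar_zero]
  | succ k ih => rw [Nat.cast_succ, add_mul, one_mul, aux_eChar_add, ih, pow_succ]

lemma aux_eChar_sum {ι : Type*} (s : Finset ι) (f : ι → ℚ_[p]) :
    eChar p (∑ i ∈ s, f i) = ∏ i ∈ s, eChar p (f i) := by
  classical
  induction s using Finset.induction_on with
  | empty => simp [aux_eChar_zero]
  | insert a s ha ih => rw [Finset.sum_insert ha, Finset.prod_insert ha, aux_eChar_add, ih]

lemma aux_eChar_continuous : Continuous (eChar p) := by
  rw [continuous_iff_continuousAt]
  intro x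
  have : eChar p =ᶠ[nhds x] fun _ => eChar p x := by
    filter_upwards [Metric.ball_mem_nhds x one_pos] with y hy
    have e : y = x + (y - x) := by ring
    have h : ‖y - x‖ ≤ 1 := by
      rw [Metric.mem_ball, dist_eq_norm] at hy
      exact hy.le
    rw [e, aux_eChar_add, (aux_eChar_eq_one p _).2 h, mul_one]
  exact (continuousAt_const).congr this.symm

/-! ### Cosets -/

/-- smallness -/
def auxSmall (n : ℕ) (v : Fin d → ℤ_[p]) : Prop := ∀ i, ‖v i‖ ≤ (p : ℝ) ^ (-(n : ℤ))

variable {p d}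

lemma auxSmall_add {n : ℕ} {v w : Fin d → ℤ_[p]} (hv : auxSmall p d n v) (hw : auxSmall p d n w) :
    auxSmall p d n (v + w) := fun i =>
  (IsUltrametricDist.norm_add_le_max _ _).trans (max_le (hv i) (hw i))

lemma auxSmall_neg {n : ℕ} {v : Fin d → ℤ_[p]} (hv : auxSmall p d n v) :
    auxSmall p d n (-v) := fun i => by
  rw [Pi.neg_apply, norm_neg]; exact hv i

lemma auxSmall_add_iff {n : ℕ} {v w : Fin d → ℤ_[p]} (hw : auxSmall p d n w) :
    auxSmall p d n (v + w) ↔ auxSmall p d n v := by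
  refine ⟨fun h => ?_, fun h => auxSmall_add h hw⟩
  have := auxSmall_add h (auxSmall_neg hw)
  simpa using this

open Classical in
lemma aux_indC (n : ℕ) (h u : Fin d → ℤ_[p]) :
    indC p d n h u = if auxSmall p d n (u - h) then 1 else 0 := by
  simp [indC, Set.indicator, auxSmall]

lemma aux_small_iff (n : ℕ) (x : ℤ_[p]) :
    ‖x‖ ≤ (p : ℝ) ^ (-(n : ℤ)) ↔ PadicInt.toZModPow n x = 0 := by
  rw [PadicInt.norm_le_pow_iff_mem_span_pow, ← PadicInt.ker_toZModPow, RingHom.mem_ker]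

/-- the vector of naturals -/
def auxVec {n : ℕ} (h : Fin d → Fin (p ^ n)) : Fin d → ℤ_[p] := fun i => ((h i : ℕ) : ℤ_[p])

lemma aux_exists_unique (n : ℕ) (u : Fin d → ℤ_[p]) :
    ∃ h : Fin d → Fin (p ^ n), ∀ h' : Fin d → Fin (p ^ n),
      auxSmall p d n (u - auxVec h') ↔ h' = h := by
  have : NeZero (p ^ n) := ⟨pow_ne_zero _ (Fact.out : p.Prime).ne_zero⟩
  refine ⟨fun i => ⟨(PadicInt.toZModPow n (u i)).val, ZMod.val_lt _⟩, fun h' => ?_⟩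
  rw [funext_iff, auxSmall]
  refine forall_congr' fun i => ?_
  rw [aux_small_iff, Pi.sub_apply, map_sub, auxVec, map_natCast, sub_eq_zero, Fin.ext_iff]
  constructor
  · intro h
    simp only [h]
    rw [ZMod.val_cast_of_lt (h' i).2]
  · intro h
    rw [h]; simp

lemma aux_sum_indC (n : ℕ) (u : Fin d → ℤ_[p]) :
    ∑ h : Fin d → Fin (p ^ n), indC p d n (auxVec h) u = 1 := by
  classical
  obtain ⟨h, hh⟩ := aux_exists_unique n u
  simp [aux_indC, hh]

lemma aux_indC_continuous (n : ℕ) (h : Fin d → ℤ_[p]) : Continuous (indC p d n h) := by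
  have hp : (0 : ℝ) < p := by exact_mod_cast (Fact.out : p.Prime).pos
  rw [continuous_iff_continuousAt]
  intro x
  have : indC p d n h =ᶠ[nhds x] fun _ => indC p d n h x := by
    filter_upwards [Metric.ball_mem_nhds x (zpow_pos hp (-(n : ℤ)))] with y hy
    have hs : auxSmall p d n (y - x) := by
      intro i
      rw [Metric.mem_ball] at hy
      have := (dist_le_pi_dist y x i).trans hy.le
      rwa [dist_eq_norm] at this
    have e : y - h = (x - h) + (y - x) := by ring
    rw [aux_indC, aux_indC, e]
    congr 1
    exact propext (auxSmall_add_iff hs)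
  exact (continuousAt_const).congr this.symm

/-! ### orthogonality -/

lemma aux_dotZ_add_left (u v y : Fin d → ℤ_[p]) :
    dotZ p d (u + v) y = dotZ p d u y + dotZ p d v y := by
  simp [dotZ, add_mul, Finset.sum_add_distrib]

lemma aux_lam_norm {lam : ℚ_[p]} {n : ℕ} (hlam : ‖lam‖ = (p : ℝ) ^ (n : ℤ)) (x : ℤ_[p]) :
    eChar p (lam * x) = 1 ↔ ‖x‖ ≤ (p : ℝ) ^ (-(n : ℤ)) := by
  have hp : (0 : ℝ) < p := by exact_mod_cast (Fact.out : p.Prime).pos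
  rw [aux_eChar_eq_one, norm_mul, hlam, PadicInt.norm_def, zpow_neg, ← one_div,
    le_div_iff₀ (by positivity), mul_comm]

lemma aux_dot_small {n : ℕ} {y : Fin d → ℤ_[p]} (hy : auxSmall p d n y) (u : Fin d → ℤ_[p]) :
    ‖dotZ p d u y‖ ≤ (p : ℝ) ^ (-(n : ℤ)) := by
  rw [aux_small_iff, dotZ, map_sum]
  refine Finset.sum_eq_zero fun i _ => ?_
  rw [map_mul, (aux_small_iff n _).1 (hy i), mul_zero]

open Classical in
lemma aux_orth_sum {lam : ℚ_[p]} {n : ℕ} (hlam : ‖lam‖ = (p : ℝ) ^ (n : ℤ))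
    (w : Fin d → ℤ_[p]) :
    ∑ h : Fin d → Fin (p ^ n), eChar p (lam * (dotZ p d w (auxVec h) : ℤ_[p])) =
      if auxSmall p d n w then (p : ℂ) ^ (n * d) else 0 := by
  have e : ∀ h : Fin d → Fin (p ^ n), eChar p (lam * (dotZ p d w (auxVec h) : ℤ_[p])) =
      ∏ i, eChar p (lam * w i) ^ (h i : ℕ) := by
    intro h
    rw [dotZ, PadicInt.coe_sum, Finset.mul_sum, aux_eChar_sum]
    refine Finset.prod_congr rfl fun i _ => ?_
    rw [← aux_eChar_nsmul, auxVec, PadicInt.coe_mul, PadicInt.coe_natCast]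
    congr 1; ring
  simp_rw [e]
  rw [← Fintype.piFinset_univ, Finset.sum_prod_piFinset (Finset.univ : Finset (Fin (p ^ n)))
    (fun i k => eChar p (lam * w i) ^ (k : ℕ))]
  split_ifs with hw
  · have : ∀ i, eChar p (lam * w i) = 1 := fun i => (aux_lam_norm hlam _).2 (hw i)
    simp [this, pow_mul]
  · simp only [auxSmall, not_forall] at hw
    obtain ⟨i, hi⟩ := hw
    refine Finset.prod_eq_zero (Finset.mem_univ i) ?_
    rw [Fin.sum_univ_eq_sum_range (fun k => eChar p (lam * w i) ^ k)]
    rw [← aux_lam_norm hlam] at hi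
    rw [geom_sum_eq hi, ← aux_eChar_nsmul]
    have e2 : (((p ^ n : ℕ) : ℚ_[p]) * (lam * w i)) = lam * (((p ^ n : ℕ) * w i : ℤ_[p]) : ℚ_[p]) := by
      push_cast; ring
    rw [e2, (aux_lam_norm hlam _).2, sub_self, zero_div]
    rw [aux_small_iff, map_mul, map_natCast, ZMod.natCast_self, zero_mul]

/-! ### The trace formula -/

lemma aux_char_cont (lam : ℚ_[p]) (y : Fin d → ℤ_[p]) :
    Continuous fun u : Fin d → ℤ_[p] => eChar p (lam * (dotZ p d u y : ℤ_[p])) := by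
  have h : Continuous fun u : Fin d → ℤ_[p] => dotZ p d u y := by
    unfold dotZ
    fun_prop
  exact (aux_eChar_continuous p).comp (continuous_const.mul (continuous_subtype_val.comp h))

lemma aux_integrable {μ : MeasureTheory.Measure (Fin d → ℤ_[p])} (hprob : μ Set.univ = 1)
    {f : (Fin d → ℤ_[p]) → ℂ} (hf : Continuous f) : Integrable f μ := by
  have : IsProbabilityMeasure μ := ⟨hprob⟩
  obtain ⟨C, hC⟩ := isCompact_univ.exists_bound_of_continuousOn hf.continuousOn
  exact Integrable.of_bound hf.aestronglyMeasurable C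
    (Filter.Eventually.of_forall fun x => hC x (Set.mem_univ x))

open Classical in
lemma aux_orth_int {lam : ℚ_[p]} {n : ℕ} (hlam : ‖lam‖ = (p : ℝ) ^ (n : ℤ))
    {μ : MeasureTheory.Measure (Fin d → ℤ_[p])}
    (hinv : ∀ v, μ.map (· + v) = μ) (hprob : μ Set.univ = 1) (y : Fin d → ℤ_[p]) :
    ∫ u, eChar p (lam * (dotZ p d u y : ℤ_[p])) ∂μ = if auxSmall p d n y then 1 else 0 := by
  have : IsProbabilityMeasure μ := ⟨hprob⟩
  split_ifs with hy
  · have : ∀ u, eChar p (lam * (dotZ p d u y : ℤ_[p])) = 1 := fun u =>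
      (aux_lam_norm hlam _).2 (aux_dot_small hy u)
    simp [this]
  · simp only [auxSmall, not_forall] at hy
    obtain ⟨i, hi⟩ := hy
    rw [← aux_lam_norm hlam] at hi
    have hv : dotZ p d (Pi.single i 1) y = y i := by
      simp [dotZ, Pi.single_apply]
    have h1 : ∫ u, eChar p (lam * (dotZ p d u y : ℤ_[p])) ∂μ =
        (∫ u, eChar p (lam * (dotZ p d u y : ℤ_[p])) ∂μ) * eChar p (lam * y i) := by
      conv_lhs => rw [← hinv (Pi.single i 1)]
      rw [integral_map (by fun_prop) (aux_char_cont lam y).aestronglyMeasurable,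
        ← integral_mul_const]
      refine integral_congr_ae (Filter.Eventually.of_forall fun u => ?_)
      simp only
      rw [aux_dotZ_add_left, hv, PadicInt.coe_add, mul_add, aux_eChar_add]
    have h2 : (∫ u, eChar p (lam * (dotZ p d u y : ℤ_[p])) ∂μ) * (eChar p (lam * y i) - 1) = 0 := by
      rw [mul_sub, ← h1, mul_one, sub_self]
    exact (mul_eq_zero.1 h2).resolve_right (sub_ne_zero.2 hi)

lemma aux_indC_mul (n : ℕ) (h u x : Fin d → ℤ_[p]) :
    indC p d n h (u + x) * indC p d n h u = indC p d n 0 x * indC p d n h u := by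
  classical
  rw [aux_indC, aux_indC, aux_indC]
  by_cases hu : auxSmall p d n (u - h)
  · have e : u + x - h = x - 0 + (u - h) := by ring
    rw [e]
    simp only [auxSmall_add_iff hu]
  · simp [hu]

lemma aux_indC_conj (n : ℕ) (h u : Fin d → ℤ_[p]) :
    (starRingEnd ℂ) (indC p d n h u) = indC p d n h u := by
  classical
  rw [aux_indC]
  split_ifs <;> simp

lemma aux_chi (ξ η : Fin d → ℚ_[p]) (lam : ℚ_[p]) (n : ℕ)
    (hlam : ‖lam‖ = (p : ℝ) ^ (n : ℤ))
    (μ : MeasureTheory.Measure (Fin d → ℤ_[p]))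
    (hinv : ∀ v, μ.map (· + v) = μ) (hprob : μ Set.univ = 1) (g : Heis p d) :
    chiRep p d ξ η lam n μ g =
        (p : ℂ) ^ (n * d) * eChar p (dotQZ p d ξ g.x + dotQZ p d η g.y + lam * (g.z : ℚ_[p])) *
          indC p d n 0 g.x * indC p d n 0 g.y := by
  classical
  set C := (p : ℂ) ^ (n * d) *
    eChar p (dotQZ p d ξ g.x + dotQZ p d η g.y + lam * (g.z : ℚ_[p])) * indC p d n 0 g.x with hC
  have e : ∀ (h : Fin d → Fin (p ^ n)) (u : Fin d → ℤ_[p]),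
      piAct p d ξ η lam g (phiB p d n (auxVec h)) u *
        (starRingEnd ℂ) (phiB p d n (auxVec h) u) =
      C * (eChar p (lam * (dotZ p d u g.y : ℤ_[p])) * indC p d n (auxVec h) u) := by
    intro h u
    have hs : ((Real.sqrt ((p : ℝ) ^ (n * d)) : ℝ) : ℂ) * ((Real.sqrt ((p : ℝ) ^ (n * d)) : ℝ) : ℂ)
        = (p : ℂ) ^ (n * d) := by
      rw [← Complex.ofReal_mul, Real.mul_self_sqrt (by positivity)]
      push_cast; rfl
    have hm := aux_indC_mul n (auxVec h) u g.x
    simp only [piAct, phiB, map_mul, aux_indC_conj, Complex.conj_ofReal]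
    rw [mul_add, ← add_assoc, aux_eChar_add, hC, ← hs]
    linear_combination (eChar p (dotQZ p d ξ g.x + dotQZ p d η g.y + lam * (g.z : ℚ_[p])) *
      eChar p (lam * (dotZ p d u g.y : ℤ_[p])) *
      ((Real.sqrt ((p : ℝ) ^ (n * d)) : ℝ) : ℂ) * ((Real.sqrt ((p : ℝ) ^ (n * d)) : ℝ) : ℂ)) * hm
  have e1 : chiRep p d ξ η lam n μ g = ∑ h : Fin d → Fin (p ^ n), ∫ u,
      C * (eChar p (lam * (dotZ p d u g.y : ℤ_[p])) * indC p d n (auxVec h) u) ∂μ := by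
    unfold chiRep
    refine Finset.sum_congr rfl fun h _ => ?_
    exact integral_congr_ae (Filter.Eventually.of_forall fun u => e h u)
  rw [e1, ← integral_finsetSum]
  · simp_rw [← Finset.mul_sum, aux_sum_indC, mul_one]
    rw [integral_const_mul, aux_orth_int hlam hinv hprob, aux_indC n 0 g.y, sub_zero]
  · intro h _
    exact aux_integrable hprob
      (continuous_const.mul ((aux_char_cont lam g.y).mul (aux_indC_continuous n _)))

/-! ### The norm -/

lemma aux_heis_cont : Continuous fun g : Heis p d => (g.x, g.y, g.z) := continuous_induced_dom

lemma aux_cont_x : Continuous fun g : Heis p d => g.x := continuous_fst.comp aux_heis_cont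
lemma aux_cont_y : Continuous fun g : Heis p d => g.y :=
  continuous_fst.comp (continuous_snd.comp aux_heis_cont)
lemma aux_cont_z : Continuous fun g : Heis p d => g.z :=
  continuous_snd.comp (continuous_snd.comp aux_heis_cont)

lemma aux_cont_mul (g₀ : Heis p d) : Continuous fun g : Heis p d => g₀ * g := by
  rw [continuous_induced_rng]
  have hx := aux_cont_x (p := p) (d := d)
  have hy := aux_cont_y (p := p) (d := d)
  have hz := aux_cont_z (p := p) (d := d)
  refine (continuous_const.add hx).prodMk ((continuous_const.add hy).prodMk
    ((continuous_const.add hz).add ?_))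
  unfold dotZ
  fun_prop

lemma aux_norm_one (n : ℕ) (μH : MeasureTheory.Measure (Heis p d))
    (hinvH : ∀ g₀ : Heis p d, μH.map (g₀ * ·) = μH) (hprobH : μH Set.univ = 1) :
    (p : ℂ) ^ (n * d) * (p : ℂ) ^ (n * d) *
      ∫ g : Heis p d, indC p d n 0 g.x * indC p d n 0 g.y ∂μH = 1 := by
  classical
  have : IsProbabilityMeasure μH := ⟨hprobH⟩
  have hc : ∀ h k : Fin d → ℤ_[p],
      Continuous fun g : Heis p d => indC p d n h g.x * indC p d n k g.y := fun h k =>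
    ((aux_indC_continuous n h).comp aux_cont_x).mul ((aux_indC_continuous n k).comp aux_cont_y)
  have hm : ∀ h k : Fin d → ℤ_[p],
      AEStronglyMeasurable (fun g : Heis p d => indC p d n h g.x * indC p d n k g.y) μH :=
    fun h k => (hc h k).measurable.aestronglyMeasurable
  have hb : ∀ (h u : Fin d → ℤ_[p]), ‖indC p d n h u‖ ≤ 1 := by
    intro h u
    rw [aux_indC]; split_ifs <;> simp
  have hi : ∀ h k : Fin d → ℤ_[p],
      Integrable (fun g : Heis p d => indC p d n h g.x * indC p d n k g.y) μH := fun h k =>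
    Integrable.of_bound (hm h k) 1 (Filter.Eventually.of_forall fun g => by
      rw [norm_mul]
      exact mul_le_one₀ (hb _ _) (norm_nonneg _) (hb _ _))
  have heq : ∀ h k : Fin d → ℤ_[p],
      ∫ g : Heis p d, indC p d n h g.x * indC p d n k g.y ∂μH =
      ∫ g : Heis p d, indC p d n 0 g.x * indC p d n 0 g.y ∂μH := by
    intro h k
    conv_lhs => rw [← hinvH ⟨h, k, 0⟩]
    rw [integral_map (aux_cont_mul _).measurable.aemeasurable
      (hc h k).measurable.aestronglyMeasurable]
    refine integral_congr_ae (Filter.Eventually.of_forall fun g => ?_)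
    simp [heis_mul_def, aux_indC]
  have hsum : ∑ h : Fin d → Fin (p ^ n), ∑ k : Fin d → Fin (p ^ n),
      ∫ g : Heis p d, indC p d n (auxVec h) g.x * indC p d n (auxVec k) g.y ∂μH = 1 := by
    have e1 : ∀ h : Fin d → Fin (p ^ n), ∑ k : Fin d → Fin (p ^ n),
      ∫ g : Heis p d, indC p d n (auxVec h) g.x * indC p d n (auxVec k) g.y ∂μH =
      ∫ g : Heis p d, ∑ k : Fin d → Fin (p ^ n),
        indC p d n (auxVec h) g.x * indC p d n (auxVec k) g.y ∂μH := fun h =>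
      (integral_finsetSum _ fun k _ => hi _ _).symm
    simp_rw [e1]
    rw [← integral_finsetSum _ fun h _ => integrable_finsetSum _ fun k _ => hi _ _]
    simp_rw [← Finset.mul_sum, aux_sum_indC, mul_one, aux_sum_indC]
    simp
  simp_rw [heq] at hsum
  simp only [Finset.sum_const, Finset.card_univ, Fintype.card_fun, Fintype.card_fin,
    nsmul_eq_mul] at hsum
  push_cast at hsum
  rw [← pow_mul] at hsum
  rw [← hsum]; ring

lemma aux_chi_norm (ξ η : Fin d → ℚ_[p]) (lam : ℚ_[p]) (n : ℕ)
    (hlam : ‖lam‖ = (p : ℝ) ^ (n : ℤ))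
    (μ : MeasureTheory.Measure (Fin d → ℤ_[p]))
    (hinv : ∀ v, μ.map (· + v) = μ) (hprob : μ Set.univ = 1)
    (μH : MeasureTheory.Measure (Heis p d))
    (hinvH : ∀ g₀ : Heis p d, μH.map (g₀ * ·) = μH) (hprobH : μH Set.univ = 1) :
    (∫ g, ‖chiRep p d ξ η lam n μ g‖ ^ 2 ∂μH) = 1 := by
  classical
  apply Complex.ofReal_injective
  rw [← integral_complex_ofReal, Complex.ofReal_one, ← aux_norm_one n μH hinvH hprobH,
    ← integral_const_mul]
  refine integral_congr_ae (Filter.Eventually.of_forall fun g => ?_)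
  simp only
  rw [aux_chi ξ η lam n hlam μ hinv hprob g]
  simp only [norm_mul, aux_eChar_norm, aux_indC]
  split_ifs <;> simp
  ring

/-! ### Irreducibility -/

lemma aux_Hlam_inv (n : ℕ) {f : (Fin d → ℤ_[p]) → ℂ} (hf : f ∈ Hlam p d n)
    (u v : Fin d → ℤ_[p]) (hv : auxSmall p d n v) : f (u + v) = f u := by
  classical
  induction hf using Submodule.span_induction with
  | mem f h =>
    obtain ⟨h, rfl⟩ := h
    have e : u + v - h = (u - h) + v := by ring
    rw [aux_indC, aux_indC, e]
    congr 1
    exact propext (auxSmall_add_iff hv)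
  | zero => rfl
  | add f g _ _ hf hg => rw [Pi.add_apply, Pi.add_apply, hf, hg]
  | smul c f _ hf => rw [Pi.smul_apply, Pi.smul_apply, hf]

lemma aux_irred (ξ η : Fin d → ℚ_[p]) (lam : ℚ_[p]) (n : ℕ)
    (hlam : ‖lam‖ = (p : ℝ) ^ (n : ℤ))
    (W : Submodule ℂ ((Fin d → ℤ_[p]) → ℂ)) (hW : W ≤ Hlam p d n)
    (hinv : ∀ (g : Heis p d), ∀ f ∈ W, piAct p d ξ η lam g f ∈ W) :
    W = ⊥ ∨ W = Hlam p d n := by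
  classical
  by_cases hbot : W = ⊥
  · exact Or.inl hbot
  right
  obtain ⟨f, hfW, hf0⟩ := Submodule.exists_mem_ne_zero_of_ne_bot hbot
  obtain ⟨u₀, hu₀⟩ := Function.ne_iff.1 hf0
  have hu₀' : f u₀ ≠ 0 := hu₀
  have hne : ∀ x, eChar p x ≠ 0 := fun x => Complex.exp_ne_zero _
  -- the indicator of the coset of `u₀`
  have h1 : indC p d n u₀ ∈ W := by
    have hmem : ∑ h : Fin d → Fin (p ^ n),
        (eChar p (dotQZ p d η (auxVec h)))⁻¹ • eChar p (lam * (dotZ p d (-u₀) (auxVec h) : ℤ_[p])) •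
          piAct p d ξ η lam ⟨0, auxVec h, 0⟩ f ∈ W :=
      Submodule.sum_mem _ fun h _ => W.smul_mem _ (W.smul_mem _ (hinv _ _ hfW))
    have heq : ∑ h : Fin d → Fin (p ^ n),
        (eChar p (dotQZ p d η (auxVec h)))⁻¹ • eChar p (lam * (dotZ p d (-u₀) (auxVec h) : ℤ_[p])) •
          piAct p d ξ η lam ⟨0, auxVec h, 0⟩ f = ((p : ℂ) ^ (n * d) * f u₀) • indC p d n u₀ := by
      ext u
      have ht : ∀ h : Fin d → Fin (p ^ n),
          ((eChar p (dotQZ p d η (auxVec h)))⁻¹ •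
            eChar p (lam * (dotZ p d (-u₀) (auxVec h) : ℤ_[p])) •
            piAct p d ξ η lam ⟨0, auxVec h, 0⟩ f) u =
          eChar p (lam * (dotZ p d (u - u₀) (auxVec h) : ℤ_[p])) * f u := by
        intro h
        have hz : dotQZ p d ξ 0 = 0 := by simp [dotQZ]
        simp only [Pi.smul_apply, smul_eq_mul, piAct, hz, zero_add, add_zero, PadicInt.coe_zero]
        rw [sub_eq_add_neg, aux_dotZ_add_left, PadicInt.coe_add, mul_add, aux_eChar_add,
          aux_eChar_add]
        field_simp [hne]
      rw [Finset.sum_apply]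
      simp_rw [ht]
      rw [← Finset.sum_mul, aux_orth_sum hlam, Pi.smul_apply, aux_indC, smul_eq_mul]
      split_ifs with hs
      · have := aux_Hlam_inv n (hW hfW) u₀ (u - u₀) hs
        rw [add_sub_cancel] at this
        rw [this, mul_one]
      · simp
    rw [heq] at hmem
    have hp0 : (p : ℂ) ≠ 0 := by exact_mod_cast (Fact.out : p.Prime).ne_zero
    exact (W.smul_mem_iff (mul_ne_zero (pow_ne_zero _ hp0) hu₀')).1 hmem
  refine le_antisymm hW (Submodule.span_le.2 ?_)
  rintro _ ⟨h, rfl⟩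
  have h2 := hinv ⟨u₀ - h, 0, 0⟩ _ h1
  have h3 : piAct p d ξ η lam ⟨u₀ - h, 0, 0⟩ (indC p d n u₀) =
      eChar p (dotQZ p d ξ (u₀ - h)) • indC p d n h := by
    ext u
    have hz : dotQZ p d η 0 = 0 := by simp [dotQZ]
    have hz2 : dotZ p d u 0 = 0 := by simp [dotZ]
    have e : u + (u₀ - h) - u₀ = u - h := by ring
    simp only [piAct, hz, hz2, PadicInt.coe_zero, add_zero, mul_zero, Pi.smul_apply, smul_eq_mul,
      aux_indC, e]
  rw [h3] at h2
  exact (W.smul_mem_iff (hne _)).1 h2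

variable (p d)

/-- The character of `π_{(ξ,η,λ)}` (`|λ|_p = p^n > 1`) equals
`p^{nd} e^{2πi{ξ·x + η·y + λz}_p} 1_{p^n ℤ_p^d}(x) 1_{p^n ℤ_p^d}(y)`, its `L²`-norm over
`H_d` equals `1`, and consequently `π_{(ξ,η,λ)}` is irreducible. -/
theorem character_formula_norm_and_irreducible (ξ η : Fin d → ℚ_[p]) (lam : ℚ_[p]) (n : ℕ)
    (hn : 0 < n) (hlam : ‖lam‖ = (p : ℝ) ^ (n : ℤ))
    (μ : MeasureTheory.Measure (Fin d → ℤ_[p]))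
    (hinv : ∀ v, μ.map (· + v) = μ) (hprob : μ Set.univ = 1)
    (μH : MeasureTheory.Measure (Heis p d))
    (hinvH : ∀ g₀ : Heis p d, μH.map (g₀ * ·) = μH) (hprobH : μH Set.univ = 1) :
    (∀ g : Heis p d, chiRep p d ξ η lam n μ g =
        (p : ℂ) ^ (n * d) * eChar p (dotQZ p d ξ g.x + dotQZ p d η g.y + lam * (g.z : ℚ_[p])) *
          indC p d n 0 g.x * indC p d n 0 g.y) ∧
    (∫ g, ‖chiRep p d ξ η lam n μ g‖ ^ 2 ∂μH) = 1 ∧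
    (∀ W : Submodule ℂ ((Fin d → ℤ_[p]) → ℂ), W ≤ Hlam p d n →
      (∀ (g : Heis p d), ∀ f ∈ W, piAct p d ξ η lam g f ∈ W) →
      W = ⊥ ∨ W = Hlam p d n) := by
  exact ⟨fun g => aux_chi ξ η lam n hlam μ hinv hprob g,
    aux_chi_norm ξ η lam n hlam μ hinv hprob μH hinvH hprobH,
    fun W hW hinvW => aux_irred ξ η lam n hlam W hW hinvW⟩
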